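/- Let G be a finite simple graph on vertex set V, let A ∈ S(G) be positive semidefinite, and let x be a vector with A x = 0 that vanishes on a set B ⊆ V. Suppose v ∈ B, w ∉ B, W is the vertex set of the connected component containing w in the induced subgraph of G on V ∖ B, and w is the unique neighbor of v lying in W. Then x_w = 0. -/

import Mathlib

open scoped ComplexOrder

/-!
Let `W` be the component of `w` off `B` and let `y` agree with `x` on `W` and vanish elsewhere.
Every neighbor of a vertex of `W` lies in `W` or in `B`, where `x` vanishes, so `A y` agrees with
`A x = 0` on `W`. Thus `y` and `A y` have disjoint supports, so `y* A y = 0`, and semidefiniteness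
gives `A y = 0`. Its entry at `v` has `A v w * x w` as only surviving term, and `A v w ≠ 0`.
-/

open Matrix

section MulVecIndicator

variable {m n R : Type*} [Fintype n] [NonUnitalNonAssocSemiring R]
  (A : Matrix m n R) (x : n → R) {W : Set n} {i : m}

lemma mulVec_indicator_apply_of_forall_notMem (h : ∀ j ∉ W, A i j * x j = 0) :
    (A *ᵥ W.indicator x) i = (A *ᵥ x) i := by
  refine Finset.sum_congr rfl fun j _ ↦ ?_
  by_cases hj : j ∈ W
  · rw [Set.indicator_of_mem hj]
  · rw [Set.indicator_of_notMem hj, mul_zero, h j hj]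

lemma mulVec_indicator_apply_of_unique {w : n} (hw : w ∈ W) (h : ∀ j ∈ W, A i j ≠ 0 → j = w) :
    (A *ᵥ W.indicator x) i = A i w * x w := by
  rw [mulVec_apply_eq_sum, Fintype.sum_eq_single w, Set.indicator_of_mem hw]
  intro j hjw
  by_cases hj : j ∈ W
  · rw [not_ne_iff.mp (mt (h j hj) hjw), zero_mul]
  · rw [Set.indicator_of_notMem hj, mul_zero]

end MulVecIndicator

section PosSemidef

variable {n 𝕜 : Type*} [Fintype n] [RCLike 𝕜] {A : Matrix n n 𝕜}

lemma posSemidef_mulVec_eq_zero_of_forall_or (hA : A.PosSemidef) {y : n → 𝕜}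
    (h : ∀ i, y i = 0 ∨ (A *ᵥ y) i = 0) : A *ᵥ y = 0 := by
  refine (hA.dotProduct_mulVec_zero_iff y).mp (Finset.sum_eq_zero fun i _ ↦ ?_)
  rcases h i with hy | hAy
  · rw [Pi.star_apply, hy, star_zero, zero_mul]
  · rw [hAy, mul_zero]

lemma posSemidef_mulVec_indicator_eq_zero (hA : A.PosSemidef) {x : n → 𝕜} {W : Set n}
    (hx : ∀ i ∈ W, (A *ᵥ x) i = 0) (hW : ∀ i ∈ W, ∀ j ∉ W, A i j * x j = 0) :
    A *ᵥ W.indicator x = 0 := by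
  refine posSemidef_mulVec_eq_zero_of_forall_or hA fun i ↦ ?_
  by_cases hi : i ∈ W
  · exact .inr ((mulVec_indicator_apply_of_forall_notMem A x (hW i hi)).trans (hx i hi))
  · exact .inl (Set.indicator_of_notMem hi x)

end PosSemidef

lemma mem_image_connectedComponent_induce_of_adj {V : Type*} {G : SimpleGraph V} {S : Set V}
    (C : (G.induce S).ConnectedComponent) {i j : V} (hi : i ∈ Subtype.val '' (C : Set S))
    (hj : j ∈ S) (hij : G.Adj i j) : j ∈ Subtype.val '' (C : Set S) := by
  obtain ⟨i, hiC, rfl⟩ := hi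
  have hadj : (G.induce S).Adj i ⟨j, hj⟩ := hij
  exact ⟨⟨j, hj⟩, C.mem_supp_of_adj_mem_supp hiC hadj, rfl⟩

theorem psd_color_change_rule_null_vector_general
    {V 𝕜 : Type*} [Fintype V] [RCLike 𝕜] (G : SimpleGraph V)
    (A : Matrix V V 𝕜) (hA : A.PosSemidef) (hpat : ∀ i j : V, i ≠ j → A i j ≠ 0 → G.Adj i j)
    (x : V → 𝕜) (B : Set V) (hxB : ∀ i ∈ B, x i = 0)
    (C : (G.induce {a : V | a ∉ B}).ConnectedComponent) (hx : ∀ i ∈ C, (A *ᵥ x) i = 0)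
    (v : V) (w : {a : V | a ∉ B}) (hw : w ∈ C) (hvw : A v w ≠ 0)
    (huniq : ∀ u ∈ C, A v u ≠ 0 → u = w) :
    x w = 0 := by
  set W : Set V := Subtype.val '' (C : Set {a : V | a ∉ B})
  have hW : ∀ i ∈ W, ∀ j ∉ W, A i j * x j = 0 := by
    intro i hi j hj
    by_cases hjB : j ∈ B
    · rw [hxB j hjB, mul_zero]
    · have hnadj : ¬ G.Adj i j := mt (mem_image_connectedComponent_induce_of_adj C hi hjB) hj
      rw [not_ne_iff.mp (mt (hpat i j (ne_of_mem_of_not_mem hi hj)) hnadj), zero_mul]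
  have hAy : A *ᵥ W.indicator x = 0 :=
    posSemidef_mulVec_indicator_eq_zero hA (Set.forall_mem_image.mpr fun i hi ↦ hx i hi) hW
  have hvx : A v w * x w = 0 := by
    rw [← mulVec_indicator_apply_of_unique A x (Set.mem_image_of_mem _ hw), hAy, Pi.zero_apply]
    exact Set.forall_mem_image.mpr fun u hu hvu ↦ congrArg Subtype.val (huniq u hu hvu)
  exact (mul_eq_zero.mp hvx).resolve_left hvw

/-- Positive semidefinite color change rule for null vectors: if `A ∈ S(G)` is positive
semidefinite, `A x = 0`, `x` vanishes on `B`, `v ∈ B`, `w ∉ B`, and `w` is the unique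
neighbor of `v` lying in the connected component of `w` in the induced subgraph of `G`
on the complement of `B`, then `x w = 0`. -/
theorem psd_color_change_rule_null_vector
    {V : Type*} [Fintype V] [DecidableEq V] (G : SimpleGraph V)
    (A : Matrix V V ℂ) (hA : A.PosSemidef)
    (hpat : ∀ i j : V, i ≠ j → (A i j ≠ 0 ↔ G.Adj i j))
    (x : V → ℂ) (hx : A.mulVec x = 0)
    (B : Set V) (hxB : ∀ i ∈ B, x i = 0)
    (v : V) (hv : v ∈ B) (w : V) (hw : w ∉ B) (hadj : G.Adj v w)
    (huniq : ∀ u : V, G.Adj v u → ∀ hu : u ∉ B,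
      (G.induce {a : V | a ∉ B}).Reachable ⟨u, hu⟩ ⟨w, hw⟩ → u = w) :
    x w = 0 := by
  refine psd_color_change_rule_null_vector_general G A hA (fun i j hij ↦ (hpat i j hij).mp) x B hxB
    (.mk _ ⟨w, hw⟩) (fun i _ ↦ congrFun hx i) v ⟨w, hw⟩ rfl ((hpat v w hadj.ne).mpr hadj) ?_
  exact fun u huC hvu ↦ Subtype.ext <| huniq u ((hpat v u (ne_of_mem_of_not_mem hv u.2)).mp hvu) u.2
    (SimpleGraph.ConnectedComponent.exact huC)
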